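/- arXiv:1106.4870 — 3 statements merged into one kernel-verified Lean document; each statement's English description precedes it below -/
import Mathlib

section
/- Let Q be gratifying in x_1,…,x_n with defining polynomial P, and set A_0 = (Q·(1 − x_1))|_{x_1 = 1} and A_n = (Q·(1 − x_1 x_n))|_{x_1 = 1/x_n}. Then: (i) A_0 is gratifying in x_2,…,x_n, with defining polynomial P' determined by P'(x_2^{−1},…,x_n^{−1}) = P(1, x_2^{−1},…,x_n^{−1}) · ∏_{i=2}^n (1 − x_i^{−1}); (ii) A_n = [P''(x_2^{−1},…,x_{n−1}^{−1}) · ∏_{2≤i≠j≤n−1}(1 − x_i/x_j)] / [∏_{i=2}^{n−1}(1 − x_i) · ∏_{2≤i<j≤n−1}(1 − x_i x_j)], where P'' is the polynomial in x_2,…,x_{n−1} (with coefficients Laurent polynomials in x_n) determined by P''(x_2^{−1},…,x_{n−1}^{−1}) = P(x_n, x_2^{−1},…,x_n^{−1}) · ((1+x_n)^2/x_n) · ∏_{j=2}^{n−1} (1 − 1/(x_n x_j))(1 − x_n/x_j). -/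
open Finset

noncomputable section Stmt9Defs

/-- The field `ℚ(x₂,…,xₙ)` of rational functions in the last `m = n-1`
variables. -/
abbrev FF (m : ℕ) := FractionRing (MvPolynomial (Fin m) ℚ)

/-- The canonical map `ℚ →+* ℚ(x₂,…,xₙ)`. -/
def ψ (m : ℕ) : ℚ →+* FF m :=
  (algebraMap (MvPolynomial (Fin m) ℚ) (FF m)).comp MvPolynomial.C

/-- The variable `x_{i+2}` as an element of `ℚ(x₂,…,xₙ)`. -/
def yy {m : ℕ} (i : Fin m) : FF m :=
  algebraMap (MvPolynomial (Fin m) ℚ) (FF m) (MvPolynomial.X i)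

/-- The variables `x₁,…,xₙ` (`n = m+1`) as elements of `ℚ(x₂,…,xₙ)(x₁)`:
`x₁` is the `RatFunc` variable, the others are constants. -/
def uu {m : ℕ} (i : Fin (m + 1)) : RatFunc (FF m) :=
  Fin.cases RatFunc.X (fun j => RatFunc.C (yy j)) i

/-- A rational function `Q` gratifying in `x₁,…,xₙ` with defining polynomial
`P`, i.e. `Q = ∏_{i≠j}(1-xᵢ/xⱼ)·P(x₁⁻¹,…,xₙ⁻¹) / (∏ᵢ(1-xᵢ)·∏_{i<j}(1-xᵢxⱼ))`,
viewed as an element of `ℚ(x₂,…,xₙ)(x₁)`. -/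
def ratQ {m : ℕ} (P : MvPolynomial (Fin (m + 1)) ℚ) : RatFunc (FF m) :=
  (∏ p ∈ (univ : Finset (Fin (m + 1))).offDiag, (1 - uu p.1 / uu p.2)) *
    MvPolynomial.eval₂ (RatFunc.C.comp (ψ m)) (fun i => (uu i)⁻¹) P /
  ((∏ i : Fin (m + 1), (1 - uu i)) *
    ∏ p ∈ univ.filter (fun p : Fin (m + 1) × Fin (m + 1) => p.1 < p.2),
      (1 - uu p.1 * uu p.2))

/-- `A₀ = (Q·(1-x₁))|_{x₁=1}`, the substitution being performed after reducing
to lowest terms (which is what `RatFunc.eval` does). -/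
def A0 {m : ℕ} (P : MvPolynomial (Fin (m + 1)) ℚ) : FF m :=
  RatFunc.eval (RingHom.id (FF m)) 1 (ratQ P * (1 - RatFunc.X))

/-- `A_r = (Q·(1-x₁x_r))|_{x₁=1/x_r}`, the substitution being performed after
reducing to lowest terms. -/
def Ar {m : ℕ} (P : MvPolynomial (Fin (m + 1)) ℚ) (r : Fin m) : FF m :=
  RatFunc.eval (RingHom.id (FF m)) (yy r)⁻¹ (ratQ P * (1 - RatFunc.X * RatFunc.C (yy r)))

end Stmt9Defs

/-!
A gratifying function is `P(x₁⁻¹,…,xₙ⁻¹)` times a factor `(1 - xᵢ)⁻¹` for every variable and a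
symmetric factor `c(x, y) = (1 - x/y)(1 - y/x) / (1 - xy)` for every pair of variables.  Regarded as
a function of `x₁`, its pole at `1` comes only from `(1 - x₁)⁻¹` and its pole at `1/xₙ` only from
`c(x₁, xₙ)`; all the other factors are evaluated directly.  At `x₁ = 1` one has
`c(1, y) = 1 - y⁻¹`.  At `x₁ = 1/xₙ`, writing `z = xₙ`, the two factors linking `xⱼ` to `x₁` and to
`xₙ` combine to `c(z⁻¹, y) c(z, y) = (1 - (zy)⁻¹)(1 - z/y)`, and the factors involving only `x₁` and
`xₙ` leave `(1 - z⁻²)(1 - z²) / ((1 - z⁻¹)(1 - z)) = (1 + z)²/z`.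
-/

universe u

section Evaluation

variable {K L : Type u} [Field K] [Field L] {φ : K →+* L} {a : L} {f g : RatFunc K} {v w : L}

/-- The rational function `f` has no pole at `a` and takes the value `v` there, its coefficients
being mapped along `φ`.  Unlike the bare equation `RatFunc.eval φ a f = v`, which reads `0 = v` at
a pole, this is compatible with sums, products and inverses of nonzero values. -/
def HasEvalAt (φ : K →+* L) (a : L) (f : RatFunc K) (v : L) : Prop :=
  f.denom.eval₂ φ a ≠ 0 ∧ f.eval φ a = v

namespace HasEvalAt

theorem eval_eq (hf : HasEvalAt φ a f v) : f.eval φ a = v := hf.2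

theorem const (φ : K →+* L) (a : L) (c : K) : HasEvalAt φ a (RatFunc.C c) (φ c) := by
  simp [HasEvalAt]

theorem var (φ : K →+* L) (a : L) : HasEvalAt φ a RatFunc.X a := by
  simp [HasEvalAt]

theorem one (φ : K →+* L) (a : L) : HasEvalAt φ a 1 1 := by
  simpa using const φ a 1

theorem add (hf : HasEvalAt φ a f v) (hg : HasEvalAt φ a g w) :
    HasEvalAt φ a (f + g) (v + w) := by
  refine ⟨ne_zero_of_dvd_ne_zero ?_ (map_dvd (Polynomial.eval₂RingHom φ a)
    (RatFunc.denom_add_dvd f g)), by rw [RatFunc.eval_add φ a hf.1 hg.1, hf.2, hg.2]⟩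
  simpa using ⟨hf.1, hg.1⟩

theorem mul (hf : HasEvalAt φ a f v) (hg : HasEvalAt φ a g w) :
    HasEvalAt φ a (f * g) (v * w) := by
  refine ⟨ne_zero_of_dvd_ne_zero ?_ (map_dvd (Polynomial.eval₂RingHom φ a)
    (RatFunc.denom_mul_dvd f g)), by rw [RatFunc.eval_mul φ a hf.1 hg.1, hf.2, hg.2]⟩
  simpa using ⟨hf.1, hg.1⟩

theorem sub (hf : HasEvalAt φ a f v) (hg : HasEvalAt φ a g w) :
    HasEvalAt φ a (f - g) (v - w) := by
  simpa [sub_eq_add_neg] using hf.add ((const φ a (-1)).mul hg)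

theorem ne_zero (hf : HasEvalAt φ a f v) (hv : v ≠ 0) : f ≠ 0 := by
  rintro rfl
  exact hv (by simpa using hf.eval_eq.symm)

theorem inv (hf : HasEvalAt φ a f v) (hv : v ≠ 0) : HasEvalAt φ a f⁻¹ v⁻¹ := by
  have hf0 : f ≠ 0 := hf.ne_zero hv
  have hnum : f.num.eval₂ φ a ≠ 0 := fun h => hv (by rw [← hf.2, RatFunc.eval, h, zero_div])
  have hdenom : f⁻¹.denom.eval₂ φ a ≠ 0 :=
    ne_zero_of_dvd_ne_zero hnum (map_dvd (Polynomial.eval₂RingHom φ a) (RatFunc.denom_inv_dvd hf0))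
  refine ⟨hdenom, eq_inv_of_mul_eq_one_left ?_⟩
  rw [← hf.2, ← RatFunc.eval_mul φ a hdenom hf.1, inv_mul_cancel₀ hf0, RatFunc.eval_one]

theorem div (hf : HasEvalAt φ a f v) (hg : HasEvalAt φ a g w) (hw : w ≠ 0) :
    HasEvalAt φ a (f / g) (v / w) := by
  simpa only [div_eq_mul_inv] using hf.mul (hg.inv hw)

theorem prod {ι : Type*} (s : Finset ι) {f : ι → RatFunc K} {v : ι → L}
    (h : ∀ i ∈ s, HasEvalAt φ a (f i) (v i)) : HasEvalAt φ a (∏ i ∈ s, f i) (∏ i ∈ s, v i) := by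
  classical
  induction s using Finset.induction_on with
  | empty => simpa using one φ a
  | insert i s hi ih =>
    rw [prod_insert hi, prod_insert hi]
    exact (h i (mem_insert_self i s)).mul (ih fun j hj => h j (mem_insert_of_mem hj))

theorem mvPolynomial_eval₂ {R σ : Type*} [CommSemiring R] (χ : R →+* K) {f : σ → RatFunc K}
    {v : σ → L} (h : ∀ i, HasEvalAt φ a (f i) (v i)) (P : MvPolynomial σ R) :
    HasEvalAt φ a (P.eval₂ (RatFunc.C.comp χ) f) (P.eval₂ (φ.comp χ) v) := by
  induction P using MvPolynomial.induction_on with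
  | C c => simpa using const φ a (χ c)
  | add p q hp hq => simpa only [MvPolynomial.eval₂_add] using hp.add hq
  | mul_X p i hp =>
    simpa only [MvPolynomial.eval₂_mul, MvPolynomial.eval₂_X] using hp.mul (h i)

end HasEvalAt

theorem one_sub_X_mul_C_ne_zero (c : K) : (1 - RatFunc.X * RatFunc.C c : RatFunc K) ≠ 0 :=
  ((HasEvalAt.one (RingHom.id K) 0).sub ((HasEvalAt.var _ 0).mul (HasEvalAt.const _ 0 c))).ne_zero
    (by simp)

theorem one_sub_X_ne_zero : (1 - RatFunc.X : RatFunc K) ≠ 0 := by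
  simpa using one_sub_X_mul_C_ne_zero (1 : K)

end Evaluation

section PairProducts

variable {M : Type*} [CommMonoid M]

theorem prod_offDiag_eq_prod_lt {ι : Type*} [Fintype ι] [LinearOrder ι] (f : ι → ι → M) :
    ∏ p ∈ (univ : Finset ι).offDiag, f p.1 p.2 =
      ∏ p : ι × ι with p.1 < p.2, f p.1 p.2 * f p.2 p.1 := by
  rw [prod_mul_distrib, ← prod_filter_mul_prod_filter_not _ fun p : ι × ι => p.1 < p.2]
  congr 1
  · exact prod_congr (by ext p; simpa using ne_of_lt) fun _ _ => rfl
  · refine prod_nbij' Prod.swap Prod.swap ?_ ?_ ?_ ?_ ?_ <;>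
      simp +contextual [lt_iff_le_and_ne, eq_comm]

theorem prod_lt_eq_prod_prod_ite {ι : Type*} [Fintype ι] [LT ι] [DecidableLT ι]
    (f : ι → ι → M) :
    ∏ p : ι × ι with p.1 < p.2, f p.1 p.2 = ∏ i, ∏ j, if i < j then f i j else 1 := by
  rw [prod_filter, Fintype.prod_prod_type]

theorem prod_lt_fin_succ {n : ℕ} (f : Fin (n + 1) → Fin (n + 1) → M) :
    ∏ p : Fin (n + 1) × Fin (n + 1) with p.1 < p.2, f p.1 p.2 =
      (∏ j : Fin n, f 0 j.succ) * ∏ p : Fin n × Fin n with p.1 < p.2, f p.1.succ p.2.succ := by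
  rw [prod_lt_eq_prod_prod_ite, prod_lt_eq_prod_prod_ite fun i j : Fin n => f i.succ j.succ]
  simp [Fin.prod_univ_succ]

theorem prod_lt_fin_castSucc {n : ℕ} (f : Fin (n + 1) → Fin (n + 1) → M) :
    ∏ p : Fin (n + 1) × Fin (n + 1) with p.1 < p.2, f p.1 p.2 =
      (∏ j : Fin n, f j.castSucc (Fin.last n)) *
        ∏ p : Fin n × Fin n with p.1 < p.2, f p.1.castSucc p.2.castSucc := by
  rw [prod_lt_eq_prod_prod_ite, prod_lt_eq_prod_prod_ite fun i j : Fin n => f i.castSucc j.castSucc]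
  simp [Fin.prod_univ_castSucc, prod_mul_distrib, (Fin.castSucc_lt_last _).not_gt, mul_comm]

end PairProducts

section GratifyingFactor

/-- The contribution `(1 - x/y)(1 - y/x) / (1 - xy)` of a pair of variables to a gratifying
function. -/
def pairFactor {K : Type*} [Field K] (x y : K) : K :=
  (1 - x / y) * (1 - y / x) / (1 - x * y)

/-- The gratifying function in `u₁,…,uₙ` whose defining polynomial is `1`; every other gratifying
function is its product with `P(u₁⁻¹,…,uₙ⁻¹)`. -/
def gratifyingFactor {K : Type*} [Field K] {n : ℕ} (u : Fin n → K) : K :=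
  (∏ i, (1 - u i)⁻¹) * ∏ p : Fin n × Fin n with p.1 < p.2, pairFactor (u p.1) (u p.2)

variable {K L : Type*} [Field K] [Field L] {n : ℕ}

theorem pairFactor_comm (x y : K) : pairFactor x y = pairFactor y x := by
  rw [pairFactor, pairFactor, mul_comm x y, mul_comm (1 - x / y)]

theorem map_pairFactor (φ : K →+* L) (x y : K) : φ (pairFactor x y) = pairFactor (φ x) (φ y) := by
  simp [pairFactor]

theorem pairFactor_one_left {y : K} (hy : y ≠ 1) : pairFactor 1 y = 1 - y⁻¹ := by
  have : 1 - y ≠ 0 := sub_ne_zero.2 hy.symm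
  simp [pairFactor, this]

theorem pairFactor_mul_one_sub_mul {x y : K} (h : 1 - x * y ≠ 0) :
    pairFactor x y * (1 - x * y) = (1 - x / y) * (1 - y / x) :=
  div_mul_cancel₀ _ h

theorem pairFactor_inv_mul_pairFactor {z y : K} (hz : z ≠ 0) (hzy : y ≠ z) (hmul : y * z ≠ 1) :
    pairFactor z⁻¹ y * pairFactor z y = (1 - (z * y)⁻¹) * (1 - z / y) := by
  have h₁ : 1 - z⁻¹ * y ≠ 0 := by
    rwa [sub_ne_zero, ne_comm, Ne, inv_mul_eq_one₀ hz, eq_comm]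
  have h₂ : 1 - z * y ≠ 0 := by rwa [sub_ne_zero, ne_comm, mul_comm]
  calc pairFactor z⁻¹ y * pairFactor z y
      = (1 - z⁻¹ / y) * (1 - z / y) * ((1 - z * y) / (1 - z * y)) *
          ((1 - z⁻¹ * y) / (1 - z⁻¹ * y)) := by
        simp only [pairFactor, div_inv_eq_mul]
        ring
    _ = (1 - (z * y)⁻¹) * (1 - z / y) := by
        rw [div_self h₁, div_self h₂, mul_one, mul_one, mul_inv, ← div_eq_mul_inv]

theorem hasEvalAt_pairFactor {K L : Type u} [Field K] [Field L] {φ : K →+* L} {a : L}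
    {f g : RatFunc K} {x y : L} (hf : HasEvalAt φ a f x) (hg : HasEvalAt φ a g y)
    (hx : x ≠ 0) (hy : y ≠ 0) (hxy : x * y ≠ 1) :
    HasEvalAt φ a (pairFactor f g) (pairFactor x y) := by
  have one := HasEvalAt.one φ a
  exact ((one.sub (hf.div hg hy)).mul (one.sub (hg.div hf hx))).div (one.sub (hf.mul hg))
    (sub_ne_zero.2 hxy.symm)

theorem gratifyingFactor_eq_div (u : Fin n → K) :
    gratifyingFactor u = (∏ p ∈ (univ : Finset (Fin n)).offDiag, (1 - u p.1 / u p.2)) /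
      ((∏ i, (1 - u i)) * ∏ p : Fin n × Fin n with p.1 < p.2, (1 - u p.1 * u p.2)) := by
  rw [prod_offDiag_eq_prod_lt fun i j => 1 - u i / u j]
  simp only [gratifyingFactor, pairFactor, prod_div_distrib, prod_inv_distrib]
  rw [inv_mul_eq_div, div_div, mul_comm (∏ p with _, _)]

theorem map_gratifyingFactor (φ : K →+* L) (u : Fin n → K) :
    φ (gratifyingFactor u) = gratifyingFactor fun i => φ (u i) := by
  simp [gratifyingFactor, map_pairFactor]

theorem gratifyingFactor_cons (x : K) (y : Fin n → K) :
    gratifyingFactor (Fin.cons x y : Fin (n + 1) → K) =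
      (1 - x)⁻¹ * (∏ j, pairFactor x (y j)) * gratifyingFactor y := by
  simp only [gratifyingFactor]
  rw [prod_lt_fin_succ fun i j =>
    pairFactor ((Fin.cons x y : Fin (n + 1) → K) i) ((Fin.cons x y : Fin (n + 1) → K) j)]
  simp only [Fin.prod_univ_succ, Fin.cons_zero, Fin.cons_succ]
  ac_rfl

theorem gratifyingFactor_snoc (y : Fin n → K) (z : K) :
    gratifyingFactor (Fin.snoc y z : Fin (n + 1) → K) =
      (1 - z)⁻¹ * (∏ j, pairFactor z (y j)) * gratifyingFactor y := by
  simp only [gratifyingFactor, pairFactor_comm z]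
  rw [prod_lt_fin_castSucc fun i j =>
    pairFactor ((Fin.snoc y z : Fin (n + 1) → K) i) ((Fin.snoc y z : Fin (n + 1) → K) j)]
  simp only [Fin.prod_univ_castSucc, Fin.snoc_castSucc, Fin.snoc_last]
  ac_rfl

theorem gratifyingFactor_cons_X (y : Fin n → K) :
    gratifyingFactor (Fin.cons RatFunc.X fun j => RatFunc.C (y j)) =
      (1 - RatFunc.X)⁻¹ * (∏ j, pairFactor RatFunc.X (RatFunc.C (y j))) *
        RatFunc.C (gratifyingFactor y) := by
  rw [gratifyingFactor_cons, map_gratifyingFactor]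

end GratifyingFactor

section Specialization

variable {K : Type*} [Field K] {n : ℕ} {E : RatFunc K} {e : K} {y : Fin n → K} {z : K}

theorem hasEvalAt_gratifying_mul_one_sub_X (hE : HasEvalAt (RingHom.id K) 1 E e)
    (hy0 : ∀ j, y j ≠ 0) (hy1 : ∀ j, y j ≠ 1) :
    HasEvalAt (RingHom.id K) 1
      (E * gratifyingFactor (Fin.cons RatFunc.X fun j => RatFunc.C (y j)) * (1 - RatFunc.X))
      (e * (∏ j, (1 - (y j)⁻¹)) * gratifyingFactor y) := by
  have cancel : E * gratifyingFactor (Fin.cons RatFunc.X fun j => RatFunc.C (y j)) *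
      (1 - RatFunc.X) =
        E * (∏ j, pairFactor RatFunc.X (RatFunc.C (y j))) * RatFunc.C (gratifyingFactor y) := by
    rw [gratifyingFactor_cons_X]
    field_simp [one_sub_X_ne_zero (K := K)]
  have pairs : HasEvalAt (RingHom.id K) 1 (∏ j, pairFactor RatFunc.X (RatFunc.C (y j)))
      (∏ j, (1 - (y j)⁻¹)) := by
    refine HasEvalAt.prod _ fun j _ => ?_
    rw [← pairFactor_one_left (hy1 j)]
    exact hasEvalAt_pairFactor (HasEvalAt.var _ 1) (HasEvalAt.const _ 1 (y j)) one_ne_zero (hy0 j)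
      (by simpa using hy1 j)
  rw [cancel]
  exact (hE.mul pairs).mul (HasEvalAt.const _ 1 _)

theorem prod_pairFactor_inv_mul_gratifyingFactor_snoc (hz0 : z ≠ 0) (hz1 : z ≠ 1)
    (hyz : ∀ j, y j ≠ z) (hmul : ∀ j, y j * z ≠ 1) :
    (1 - z⁻¹)⁻¹ * (∏ j, pairFactor z⁻¹ (y j)) * ((1 - z⁻¹ / z) * (1 - z / z⁻¹)) *
        gratifyingFactor (Fin.snoc y z : Fin (n + 1) → K) =
      (1 + z) ^ 2 / z * (∏ j, ((1 - (z * y j)⁻¹) * (1 - z / y j))) * gratifyingFactor y := by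
  have scalar : (1 - z⁻¹)⁻¹ * ((1 - z⁻¹ / z) * (1 - z / z⁻¹)) * (1 - z)⁻¹ =
      (1 + z) ^ 2 / z := by
    have h₁ : 1 - z ≠ 0 := sub_ne_zero.2 hz1.symm
    have h₂ : z - 1 ≠ 0 := sub_ne_zero.2 hz1
    field_simp
    ring
  have pairs : (∏ j, pairFactor z⁻¹ (y j)) * ∏ j, pairFactor z (y j) =
      ∏ j, ((1 - (z * y j)⁻¹) * (1 - z / y j)) := by
    rw [← prod_mul_distrib]
    exact prod_congr rfl fun j _ => pairFactor_inv_mul_pairFactor hz0 (hyz j) (hmul j)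
  rw [gratifyingFactor_snoc, ← scalar, ← pairs]
  ring

theorem hasEvalAt_gratifying_mul_one_sub_X_mul_C (hE : HasEvalAt (RingHom.id K) z⁻¹ E e)
    (hy0 : ∀ j, y j ≠ 0) (hz0 : z ≠ 0) (hz1 : z ≠ 1) (hyz : ∀ j, y j ≠ z)
    (hmul : ∀ j, y j * z ≠ 1) :
    HasEvalAt (RingHom.id K) z⁻¹
      (E * gratifyingFactor (Fin.cons RatFunc.X fun j : Fin (n + 1) =>
        RatFunc.C ((Fin.snoc y z : Fin (n + 1) → K) j)) * (1 - RatFunc.X * RatFunc.C z))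
      (e * ((1 + z) ^ 2 / z) * (∏ j, ((1 - (z * y j)⁻¹) * (1 - z / y j))) *
        gratifyingFactor y) := by
  have hX := HasEvalAt.var (RingHom.id K) z⁻¹
  have hC := HasEvalAt.const (RingHom.id K) z⁻¹
  have h1 := HasEvalAt.one (RingHom.id K) z⁻¹
  have cancel : E * gratifyingFactor (Fin.cons RatFunc.X fun j : Fin (n + 1) =>
      RatFunc.C ((Fin.snoc y z : Fin (n + 1) → K) j)) * (1 - RatFunc.X * RatFunc.C z) =
        E * ((1 - RatFunc.X)⁻¹ * (∏ j, pairFactor RatFunc.X (RatFunc.C (y j))) *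
          ((1 - RatFunc.X / RatFunc.C z) * (1 - RatFunc.C z / RatFunc.X)) *
            RatFunc.C (gratifyingFactor (Fin.snoc y z : Fin (n + 1) → K))) := by
    rw [gratifyingFactor_cons_X, Fin.prod_univ_castSucc,
      ← pairFactor_mul_one_sub_mul (one_sub_X_mul_C_ne_zero z)]
    simp only [Fin.snoc_castSucc, Fin.snoc_last]
    ring
  have pole : HasEvalAt (RingHom.id K) z⁻¹ (1 - RatFunc.X)⁻¹ (1 - z⁻¹)⁻¹ :=
    (h1.sub hX).inv (sub_ne_zero.2 (by simpa [eq_comm] using hz1))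
  have pairs : HasEvalAt (RingHom.id K) z⁻¹ (∏ j, pairFactor RatFunc.X (RatFunc.C (y j)))
      (∏ j, pairFactor z⁻¹ (y j)) :=
    HasEvalAt.prod _ fun j _ => hasEvalAt_pairFactor hX (hC _) (inv_ne_zero hz0) (hy0 j)
      (by simpa [inv_mul_eq_one₀ hz0, eq_comm] using hyz j)
  have last : HasEvalAt (RingHom.id K) z⁻¹
      ((1 - RatFunc.X / RatFunc.C z) * (1 - RatFunc.C z / RatFunc.X))
      ((1 - z⁻¹ / z) * (1 - z / z⁻¹)) :=
    (h1.sub (hX.div (hC z) hz0)).mul (h1.sub ((hC z).div hX (inv_ne_zero hz0)))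
  rw [cancel, mul_assoc e, mul_assoc e,
    ← prod_pairFactor_inv_mul_gratifyingFactor_snoc hz0 hz1 hyz hmul]
  exact hE.mul (((pole.mul pairs).mul last).mul (hC _))

end Specialization

section DefiningPolynomials

theorem aeval_mem_subalgebra {R A σ : Type*} [CommSemiring R] [CommSemiring A] [Algebra R A]
    (S : Subalgebra R A) {v : σ → A} (hv : ∀ i, v i ∈ S) (P : MvPolynomial σ R) :
    MvPolynomial.aeval v P ∈ S :=
  MvPolynomial.eval₂_mem (fun _ _ => S.algebraMap_mem _) hv

theorem aeval_cases_one_mul_prod_mem_range {R A : Type*} [CommRing R] [CommRing A] [Algebra R A]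
    {n : ℕ} (b : Fin n → A) (P : MvPolynomial (Fin (n + 1)) R) :
    MvPolynomial.aeval (Fin.cases 1 b) P * ∏ i, (1 - b i) ∈
      (MvPolynomial.aeval (R := R) b).range := by
  have hb (i : Fin n) : b i ∈ (MvPolynomial.aeval (R := R) b).range :=
    ⟨MvPolynomial.X i, MvPolynomial.aeval_X b i⟩
  refine mul_mem (aeval_mem_subalgebra _ (Fin.cases ?_ hb) P)
    (prod_mem fun i _ => sub_mem (one_mem _) (hb i))
  exact one_mem _

theorem exists_aeval_div_pow_of_mem_adjoin {R K σ : Type*} [CommSemiring R] [Field K]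
    [Algebra R K] {w : σ → K} {i : σ} (hi : w i ≠ 0) {f : K}
    (hf : f ∈ Algebra.adjoin R (insert (w i)⁻¹ (Set.range w))) :
    ∃ (N : ℕ) (p : MvPolynomial σ R), MvPolynomial.aeval w p / w i ^ N = f := by
  induction hf using Algebra.adjoin_induction with
  | mem f hf =>
    obtain rfl | ⟨j, rfl⟩ := hf
    · exact ⟨1, 1, by simp⟩
    · exact ⟨0, MvPolynomial.X j, by simp⟩
  | algebraMap r => exact ⟨0, MvPolynomial.C r, by simp⟩
  | add f g _ _ hf hg =>
    obtain ⟨N, p, rfl⟩ := hf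
    obtain ⟨M, q, rfl⟩ := hg
    refine ⟨N + M, p * MvPolynomial.X i ^ M + MvPolynomial.X i ^ N * q, ?_⟩
    simp [div_add_div _ _ (pow_ne_zero N hi) (pow_ne_zero M hi), pow_add]
  | mul f g _ _ hf hg =>
    obtain ⟨N, p, rfl⟩ := hf
    obtain ⟨M, q, rfl⟩ := hg
    exact ⟨N + M, p * q, by rw [map_mul, pow_add, div_mul_div_comm]⟩

theorem aeval_cases_mul_prod_mem_adjoin {R K : Type*} [CommRing R] [Field K] [Algebra R K]
    {l : ℕ} (y : Fin (l + 1) → K) (P : MvPolynomial (Fin (l + 2)) R) :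
    MvPolynomial.aeval (Fin.cases (y (Fin.last l)) fun j => (y j)⁻¹) P *
          ((1 + y (Fin.last l)) ^ 2 / y (Fin.last l)) *
        ∏ j : Fin l, ((1 - (y (Fin.last l) * y j.castSucc)⁻¹) *
          (1 - y (Fin.last l) / y j.castSucc)) ∈
      Algebra.adjoin R (insert (y (Fin.last l))⁻¹
        (Set.range fun j : Fin (l + 1) => if (j : ℕ) < l then (y j)⁻¹ else y j)) := by
  set S := Algebra.adjoin R (insert (y (Fin.last l))⁻¹
    (Set.range fun j : Fin (l + 1) => if (j : ℕ) < l then (y j)⁻¹ else y j))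
  have hlast : y (Fin.last l) ∈ S :=
    Algebra.subset_adjoin (Set.mem_insert_of_mem _ ⟨Fin.last l, by simp⟩)
  have hlast_inv : (y (Fin.last l))⁻¹ ∈ S := Algebra.subset_adjoin (Set.mem_insert _ _)
  have hinit_inv (j : Fin l) : (y j.castSucc)⁻¹ ∈ S :=
    Algebra.subset_adjoin (Set.mem_insert_of_mem _ ⟨j.castSucc, by simp⟩)
  have hinv (j : Fin (l + 1)) : (y j)⁻¹ ∈ S := Fin.lastCases hlast_inv hinit_inv j
  simp only [div_eq_mul_inv, mul_inv]
  refine mul_mem (mul_mem (aeval_mem_subalgebra S (Fin.cases hlast hinv) P)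
    (mul_mem (pow_mem (add_mem (one_mem S) hlast) 2) hlast_inv)) (prod_mem fun j _ => ?_)
  exact mul_mem (sub_mem (one_mem S) (mul_mem hlast_inv (hinit_inv j)))
    (sub_mem (one_mem S) (mul_mem hlast (hinit_inv j)))

theorem eval₂_ψ {m : ℕ} {σ : Type*} (v : σ → FF m) (P : MvPolynomial σ ℚ) :
    P.eval₂ (ψ m) v = MvPolynomial.aeval v P := by
  rw [MvPolynomial.aeval_def, Subsingleton.elim (ψ m)]

end DefiningPolynomials

section Variables

variable {m : ℕ}

theorem yy_ne_zero (i : Fin m) : yy i ≠ 0 := by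
  simp [yy]

theorem yy_injective : Function.Injective (yy : Fin m → FF m) :=
  (IsFractionRing.injective _ _).comp MvPolynomial.X_injective

theorem yy_ne_one (i : Fin m) : yy i ≠ 1 := by
  rw [yy, Ne, FaithfulSMul.algebraMap_eq_one_iff]
  exact fun h => by simpa using congrArg (MvPolynomial.eval 0) h

theorem yy_mul_yy_ne_one (i j : Fin m) : yy i * yy j ≠ 1 := by
  rw [yy, yy, ← map_mul, Ne, FaithfulSMul.algebraMap_eq_one_iff]
  exact fun h => by simpa using congrArg (MvPolynomial.eval 0) h

theorem ratQ_eq (P : MvPolynomial (Fin (m + 1)) ℚ) :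
    ratQ P = P.eval₂ (RatFunc.C.comp (ψ m)) (fun i => (uu i)⁻¹) *
      gratifyingFactor (Fin.cons RatFunc.X fun j => RatFunc.C (yy j)) := by
  change _ = _ * gratifyingFactor uu
  rw [ratQ, gratifyingFactor_eq_div, mul_comm (∏ p ∈ _, _), mul_div_assoc]

theorem hasEvalAt_eval₂_uu_inv {a : FF m} (ha : a ≠ 0) (P : MvPolynomial (Fin (m + 1)) ℚ) :
    HasEvalAt (RingHom.id (FF m)) a (P.eval₂ (RatFunc.C.comp (ψ m)) fun i => (uu i)⁻¹)
      (P.eval₂ (ψ m) (Fin.cases a⁻¹ fun j => (yy j)⁻¹)) := by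
  refine HasEvalAt.mvPolynomial_eval₂ (ψ m) (Fin.cases ?_ fun j => ?_) P
  · exact (HasEvalAt.var _ a).inv ha
  · exact (HasEvalAt.const _ a (yy j)).inv (yy_ne_zero j)

theorem A0_eq (P : MvPolynomial (Fin (m + 1)) ℚ) :
    A0 P = P.eval₂ (ψ m) (Fin.cases 1 fun j => (yy j)⁻¹) * (∏ i : Fin m, (1 - (yy i)⁻¹)) *
      gratifyingFactor yy := by
  have hE := hasEvalAt_eval₂_uu_inv one_ne_zero P
  rw [inv_one] at hE
  rw [A0, ratQ_eq]
  exact (hasEvalAt_gratifying_mul_one_sub_X hE yy_ne_zero yy_ne_one).eval_eq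

theorem Ar_last_eq {l : ℕ} (P : MvPolynomial (Fin (l + 2)) ℚ) :
    Ar P (Fin.last l) =
      P.eval₂ (ψ (l + 1)) (Fin.cases (yy (Fin.last l)) fun j => (yy j)⁻¹) *
            ((1 + yy (Fin.last l)) ^ 2 / yy (Fin.last l)) *
          (∏ j : Fin l, ((1 - (yy (Fin.last l) * yy j.castSucc)⁻¹) *
            (1 - yy (Fin.last l) / yy j.castSucc))) *
        gratifyingFactor fun j : Fin l => yy j.castSucc := by
  have hE := hasEvalAt_eval₂_uu_inv (inv_ne_zero (yy_ne_zero (Fin.last l))) P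
  rw [inv_inv] at hE
  have key := hasEvalAt_gratifying_mul_one_sub_X_mul_C (y := fun j : Fin l => yy j.castSucc) hE
    (fun _ => yy_ne_zero _) (yy_ne_zero _) (yy_ne_one _)
    (fun j => yy_injective.ne j.castSucc_ne_last) (fun _ => yy_mul_yy_ne_one _ _)
  have snoc_yy : (Fin.snoc (fun j : Fin l => yy j.castSucc) (yy (Fin.last l)) :
      Fin (l + 1) → FF (l + 1)) = yy := Fin.snoc_init_self _
  rw [snoc_yy] at key
  rw [Ar, ratQ_eq]
  exact key.eval_eq

theorem exists_eval₂_inv_eq (P : MvPolynomial (Fin (m + 1)) ℚ) :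
    ∃ P' : MvPolynomial (Fin m) ℚ, P'.eval₂ (ψ m) (fun i => (yy i)⁻¹) =
      P.eval₂ (ψ m) (Fin.cases 1 fun j => (yy j)⁻¹) * ∏ i : Fin m, (1 - (yy i)⁻¹) := by
  simp only [eval₂_ψ]
  exact aeval_cases_one_mul_prod_mem_range (fun i => (yy i)⁻¹) P

theorem exists_eval₂_div_pow_eq {l : ℕ} (P : MvPolynomial (Fin (l + 2)) ℚ) :
    ∃ (N : ℕ) (P'' : MvPolynomial (Fin (l + 1)) ℚ),
      P''.eval₂ (ψ (l + 1)) (fun j : Fin (l + 1) => if (j : ℕ) < l then (yy j)⁻¹ else yy j) /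
          yy (Fin.last l) ^ N =
        P.eval₂ (ψ (l + 1)) (Fin.cases (yy (Fin.last l)) fun j => (yy j)⁻¹) *
            ((1 + yy (Fin.last l)) ^ 2 / yy (Fin.last l)) *
          ∏ j : Fin l, ((1 - (yy (Fin.last l) * yy j.castSucc)⁻¹) *
            (1 - yy (Fin.last l) / yy j.castSucc)) := by
  have mem := aeval_cases_mul_prod_mem_adjoin (R := ℚ) yy P
  simp only [eval₂_ψ]
  simpa using exists_aeval_div_pow_of_mem_adjoin (i := Fin.last l)
    (w := fun j : Fin (l + 1) => if (j : ℕ) < l then (yy j)⁻¹ else yy j)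
    (by simpa using yy_ne_zero (Fin.last l)) (by simpa using mem)

end Variables

/-- **Lemma 5, second part.**  Let `Q` be gratifying in `x₁,…,xₙ` with defining
polynomial `P`; here `n = l+2`, the variables `x₂,…,xₙ` are the `m = l+1`
variables of the field `FF (l+1) = ℚ(x₂,…,xₙ)`, and `xₙ = yy (Fin.last l)`.

(i) `A₀` is gratifying in `x₂,…,xₙ`, with defining polynomial `P'` determined
by `P'(x₂⁻¹,…,xₙ⁻¹) = P(1,x₂⁻¹,…,xₙ⁻¹)·∏_{i=2}^n (1-xᵢ⁻¹)`.

(ii) `Aₙ = P''(x₂⁻¹,…,x_{n-1}⁻¹)·∏_{2≤i≠j≤n-1}(1-xᵢ/xⱼ) /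
      (∏_{i=2}^{n-1}(1-xᵢ)·∏_{2≤i<j≤n-1}(1-xᵢxⱼ))`,
where `P''` is a polynomial in `x₂,…,x_{n-1}` with coefficients Laurent
polynomials in `xₙ` — encoded as `P''₀/xₙ^N` with `P''₀` an ordinary polynomial
in `x₂,…,x_{n-1},xₙ` (the variable `Fin.last l` playing the role of `xₙ`, which
is *not* inverted in the defining relation) — determined by
`P''(x₂⁻¹,…,x_{n-1}⁻¹) = P(xₙ,x₂⁻¹,…,xₙ⁻¹)·((1+xₙ)²/xₙ)·∏_{j=2}^{n-1}(1-1/(xₙxⱼ))(1-xₙ/xⱼ)`. -/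
theorem stmt_9 (l : ℕ) (P : MvPolynomial (Fin (l + 2)) ℚ) :
    (∃ P' : MvPolynomial (Fin (l + 1)) ℚ,
      MvPolynomial.eval₂ (ψ (l + 1)) (fun i => (yy i)⁻¹) P' =
        MvPolynomial.eval₂ (ψ (l + 1)) (Fin.cases 1 fun j => (yy j)⁻¹) P *
          ∏ i : Fin (l + 1), (1 - (yy i)⁻¹) ∧
      A0 P =
        (∏ p ∈ (univ : Finset (Fin (l + 1))).offDiag, (1 - yy p.1 / yy p.2)) *
          MvPolynomial.eval₂ (ψ (l + 1)) (fun i => (yy i)⁻¹) P' /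
        ((∏ i : Fin (l + 1), (1 - yy i)) *
          ∏ p ∈ univ.filter (fun p : Fin (l + 1) × Fin (l + 1) => p.1 < p.2),
            (1 - yy p.1 * yy p.2))) ∧
    (∃ (N : ℕ) (P'' : MvPolynomial (Fin (l + 1)) ℚ),
      MvPolynomial.eval₂ (ψ (l + 1))
          (fun j : Fin (l + 1) => if (j : ℕ) < l then (yy j)⁻¹ else yy j) P'' / yy (Fin.last l) ^ N =
        MvPolynomial.eval₂ (ψ (l + 1))
            (Fin.cases (yy (Fin.last l)) (fun j => (yy j)⁻¹)) P *
          ((1 + yy (Fin.last l)) ^ 2 / yy (Fin.last l)) *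
          ∏ j : Fin l,
            ((1 - (yy (Fin.last l) * yy j.castSucc)⁻¹) *
              (1 - yy (Fin.last l) / yy j.castSucc)) ∧
      Ar P (Fin.last l) =
        MvPolynomial.eval₂ (ψ (l + 1))
            (fun j : Fin (l + 1) => if (j : ℕ) < l then (yy j)⁻¹ else yy j) P'' / yy (Fin.last l) ^ N *
          (∏ p ∈ (univ : Finset (Fin l)).offDiag,
            (1 - yy p.1.castSucc / yy p.2.castSucc)) /
        ((∏ i : Fin l, (1 - yy i.castSucc)) *
          ∏ p ∈ univ.filter (fun p : Fin l × Fin l => p.1 < p.2),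
            (1 - yy p.1.castSucc * yy p.2.castSucc))) := by
  constructor
  · obtain ⟨P', hP'⟩ := exists_eval₂_inv_eq P
    refine ⟨P', hP', ?_⟩
    rw [A0_eq, hP', gratifyingFactor_eq_div, mul_div_right_comm, mul_comm]
  · obtain ⟨N, P'', hP''⟩ := exists_eval₂_div_pow_eq P
    refine ⟨N, P'', hP'', ?_⟩
    rw [Ar_last_eq, hP'', gratifyingFactor_eq_div, ← mul_div_assoc]
end

section
/- Let k ≥ 1, n = 2k, and let Q be gratifying in x_1,…,x_n with defining polynomial P = 1, i.e. Q = ∏_{1≤i≠j≤n}(1 − x_i/x_j) / [∏_{i=1}^n (1 − x_i) · ∏_{1≤i<j≤n}(1 − x_i x_j)]. For the partition M_0 = {{1,k+1},…,{k,2k}}, the rational function Q_{M_0} = Q·∏_{e=1}^k (1 − x_e x_{k+e}) evaluated at x_e = x_{k+e}^{−1} (1 ≤ e ≤ k) satisfies Q_{M_0} = B̄_k(x_{k+1},…,x_{2k})^2 · x_{k+1} x_{k+2} ⋯ x_{2k}. -/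
open Finset

/-- The variable `xᵢ` inside the field `ℚ(x₁,…,xₙ)` of rational functions. -/
noncomputable def xF (n : ℕ) (i : Fin n) : FractionRing (MvPolynomial (Fin n) ℚ) :=
  algebraMap (MvPolynomial (Fin n) ℚ) _ (MvPolynomial.X i)

/-- The substitution associated with the complete matching
`M₀ = {{1,k+1},…,{k,2k}}` of `{1,…,2k}` (`0`-based: blocks `{e, k+e}`):
`x_e = x_{k+e}⁻¹` for `e ≤ k`, the remaining variables are kept. -/
noncomputable def v11 (k : ℕ) (i : Fin (2 * k)) :
    FractionRing (MvPolynomial (Fin (2 * k)) ℚ) :=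
  if h : (i : ℕ) < k then (xF (2 * k) ⟨(i : ℕ) + k, by omega⟩)⁻¹ else xF (2 * k) i

/-!
Write `y_e = x_{k+e}` as `e^{ε_e}` and let `Δ` be the product of `1 - e^α` over the roots
`α = ±εᵢ ± εⱼ`, `i < j`, of `D_k`. The numerator is `Δ² ∏ (1 - yᵢ²)(1 - yᵢ⁻²)` and the surviving
denominator is `Δ ∏ (1 - yᵢ)(1 - yᵢ⁻¹)`, so the quotient is `Δ ∏ (1 + yᵢ)(1 + yᵢ⁻¹)`.

On the other side, `y^j + y^{-(j+1)} = (1 + y⁻¹) q_j(y + y⁻¹)` with `q_j` monic of degree `j`.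
Hence the determinant is `∏ (1 + yᵢ⁻¹)` times the Vandermonde determinant in `tᵢ = yᵢ + yᵢ⁻¹`,
and `(tⱼ - tᵢ)²` is the product of `1 - e^α` over `α = ±εᵢ ± εⱼ`.
-/

section PairProducts

variable {ι M : Type*} [CommMonoid M]

theorem prod_univ_offDiag [Fintype ι] [DecidableEq ι] (f : ι → ι → M) :
    ∏ p ∈ (univ : Finset ι).offDiag, f p.1 p.2 = ∏ i, ∏ j, if i ≠ j then f i j else 1 := by
  rw [← Fintype.prod_prod_type', ← prod_filter]
  congr 1
  ext p
  simp

theorem prod_compl_singleton_eq_prod_ite [Fintype ι] [DecidableEq ι] (f : ι → M) (i : ι) :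
    ∏ j ∈ {i}ᶜ, f j = ∏ j, if i ≠ j then f j else 1 := by
  rw [← prod_filter]
  congr 1
  ext j
  simp [eq_comm]

theorem prod_Ioi_eq_prod_ite [Fintype ι] [LinearOrder ι] [LocallyFiniteOrderTop ι]
    (f : ι → M) (i : ι) : ∏ j ∈ Ioi i, f j = ∏ j, if i < j then f j else 1 := by
  rw [← prod_filter]
  congr 1
  ext j
  simp

theorem prod_prod_eq_prod_diag_mul_sq_of_symm [Fintype ι] [LinearOrder ι]
    [LocallyFiniteOrderTop ι] [LocallyFiniteOrderBot ι] {f : ι → ι → M}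
    (hf : ∀ i j, f i j = f j i) :
    ∏ i, ∏ j, f i j = (∏ i, f i i) * (∏ i, ∏ j ∈ Ioi i, f i j) ^ 2 := by
  calc ∏ i, ∏ j, f i j = (∏ i, f i i) * ∏ i, ∏ j ∈ {i}ᶜ, f j i := by
        rw [← prod_mul_distrib]
        exact prod_congr rfl fun i _ => by simp only [Fintype.prod_eq_mul_prod_compl i, hf i]
    _ = (∏ i, f i i) * (∏ i, ∏ j ∈ Ioi i, f i j) ^ 2 := by
        rw [← prod_prod_Ioi_mul_eq_prod_prod_off_diag]
        simp only [hf _, ← sq, prod_pow]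

end PairProducts

section Halves

variable {k : ℕ} {M : Type*} [CommMonoid M]

/-- The position of `x_{i+1}` among `x₁, …, x_{2k}`. -/
def lowerHalf (i : Fin k) : Fin (2 * k) := Fin.cast (two_mul k).symm (Fin.castAdd k i)

/-- The position of `x_{k+i+1}`, the partner of `lowerHalf i` in the matching `M₀`. -/
def upperHalf (i : Fin k) : Fin (2 * k) := Fin.cast (two_mul k).symm (Fin.natAdd k i)

@[simp] theorem val_lowerHalf (i : Fin k) : (lowerHalf i : ℕ) = i := rfl

@[simp] theorem val_upperHalf (i : Fin k) : (upperHalf i : ℕ) = k + i := rfl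

theorem upperHalf_injective : Function.Injective (upperHalf : Fin k → Fin (2 * k)) :=
  (Fin.cast_injective _).comp (Fin.natAdd_injective k k)

theorem prod_univ_two_mul (f : Fin (2 * k) → M) :
    ∏ i, f i = (∏ i : Fin k, f (lowerHalf i)) * ∏ i : Fin k, f (upperHalf i) := by
  rw [← Fin.prod_congr' f (two_mul k).symm, Fin.prod_univ_add]
  rfl

theorem prod_offDiag_two_mul (f : Fin (2 * k) → Fin (2 * k) → M) :
    ∏ p ∈ univ.offDiag, f p.1 p.2 =
      ((∏ i : Fin k, ∏ j ∈ {i}ᶜ, f (lowerHalf i) (lowerHalf j)) *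
        ∏ i : Fin k, ∏ j : Fin k, f (upperHalf i) (lowerHalf j)) *
      ((∏ i : Fin k, ∏ j : Fin k, f (lowerHalf i) (upperHalf j)) *
        ∏ i : Fin k, ∏ j ∈ {i}ᶜ, f (upperHalf i) (upperHalf j)) := by
  have lower_ne_upper (i j : Fin k) : (i : ℕ) ≠ k + j := by omega
  simp only [prod_univ_offDiag, prod_univ_two_mul, prod_mul_distrib,
    prod_compl_singleton_eq_prod_ite, ne_eq, Fin.ext_iff, val_lowerHalf, val_upperHalf,
    add_right_inj, lower_ne_upper, (lower_ne_upper _ _).symm, not_false_eq_true, if_true]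
  congr!

theorem prod_lt_unmatched (f : Fin (2 * k) → Fin (2 * k) → M) :
    ∏ p ∈ univ.filter
        (fun p : Fin (2 * k) × Fin (2 * k) => p.1 < p.2 ∧ (p.1 : ℕ) + k ≠ (p.2 : ℕ)),
      f p.1 p.2 =
      ((∏ i : Fin k, ∏ j ∈ Ioi i, f (lowerHalf i) (lowerHalf j)) *
        ∏ i : Fin k, ∏ j ∈ {i}ᶜ, f (lowerHalf i) (upperHalf j)) *
      ∏ i : Fin k, ∏ j ∈ Ioi i, f (upperHalf i) (upperHalf j) := by
  have lower_lower (i j : Fin k) : (i : ℕ) < j ∧ (i : ℕ) + k ≠ j ↔ (i : ℕ) < j := by omega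
  have lower_upper (i j : Fin k) : (i : ℕ) < k + j ∧ (i : ℕ) + k ≠ k + j ↔ i ≠ j := by omega
  have upper_lower (i j : Fin k) : ¬(k + (i : ℕ) < j ∧ k + (i : ℕ) + k ≠ j) := by omega
  have upper_upper (i j : Fin k) :
      k + (i : ℕ) < k + j ∧ k + (i : ℕ) + k ≠ k + j ↔ (i : ℕ) < j := by omega
  rw [prod_filter, Fintype.prod_prod_type]
  simp only [prod_univ_two_mul, prod_mul_distrib, prod_compl_singleton_eq_prod_ite,
    prod_Ioi_eq_prod_ite, Fin.lt_def, val_lowerHalf, val_upperHalf, lower_lower, lower_upper,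
    upper_lower, upper_upper, if_false, prod_const_one, mul_one, mul_assoc]

end Halves

section Determinant

open Polynomial

variable (R : Type*) [CommRing R]

/-- The Chebyshev polynomials of the third kind, rescaled to the monic `V_n(X / 2)`.
They express `y ^ n + z ^ (n + 1)`, for `y * z = 1`, through `y + z`. -/
noncomputable def monicChebyshevV : ℕ → R[X]
  | 0 => 1
  | 1 => X - 1
  | n + 2 => X * monicChebyshevV (n + 1) - monicChebyshevV n

theorem isMonicOfDegree_monicChebyshevV [Nontrivial R] (n : ℕ) :
    IsMonicOfDegree (monicChebyshevV R n) n := by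
  induction n using Nat.twoStepInduction with
  | zero => simp [monicChebyshevV]
  | one => simpa [monicChebyshevV] using isMonicOfDegree_X_sub_one (1 : R)
  | more n ih ih' =>
    have hX : IsMonicOfDegree (X * monicChebyshevV R (n + 1)) (n + 2) := by
      simpa only [add_comm, add_left_comm] using (isMonicOfDegree_X R).mul ih'
    exact hX.sub (by rw [ih.natDegree_eq]; omega)

variable {R}

theorem monicChebyshevV_eval_add {y z : R} (hyz : y * z = 1) (n : ℕ) :
    (1 + z) * (monicChebyshevV R n).eval (y + z) = y ^ n + z ^ (n + 1) := by
  induction n using Nat.twoStepInduction with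
  | zero => simp [monicChebyshevV]
  | one =>
    simp only [monicChebyshevV, eval_sub, eval_X, eval_one]
    linear_combination hyz
  | more n ih ih' =>
    simp only [monicChebyshevV, eval_sub, eval_mul, eval_X]
    linear_combination (y + z) * ih' - ih + (y ^ n + z ^ (n + 1)) * hyz

theorem det_pow_add_pow_succ {k : ℕ} {y z : Fin k → R} (hyz : ∀ i, y i * z i = 1) :
    (Matrix.of fun i j : Fin k => y i ^ (j : ℕ) + z i ^ ((j : ℕ) + 1)).det =
      (∏ i, (1 + z i)) * ∏ i, ∏ j ∈ Ioi i, ((y j + z j) - (y i + z i)) := by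
  nontriviality R
  simp only [← monicChebyshevV_eval_add (hyz _)]
  rw [← Matrix.det_vandermonde, Matrix.det_eval_matrixOfPolynomials_eq_det_vandermonde _ _
      (fun i => (isMonicOfDegree_monicChebyshevV R i).natDegree_eq)
      (fun i => (isMonicOfDegree_monicChebyshevV R i).monic), ← Matrix.det_mul_column]
  rfl

end Determinant

section RootProduct

variable {ι K : Type*} [Fintype ι] [LinearOrder ι] [LocallyFiniteOrderTop ι] [Field K]

theorem prod_prod_compl_one_sub_div [LocallyFiniteOrderBot ι] (y : ι → K) :
    ∏ i, ∏ j ∈ {i}ᶜ, (1 - y i / y j) =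
      (∏ i, ∏ j ∈ Ioi i, (1 - y i / y j)) * ∏ i, ∏ j ∈ Ioi i, (1 - y j / y i) := by
  rw [← prod_prod_Ioi_mul_eq_prod_prod_off_diag fun j i => 1 - y i / y j]
  simp only [prod_mul_distrib, mul_comm]

theorem prod_prod_one_sub_mul {R : Type*} [CommRing R] [LocallyFiniteOrderBot ι] (y : ι → R) :
    ∏ i, ∏ j, (1 - y i * y j) =
      (∏ i, (1 - y i ^ 2)) * (∏ i, ∏ j ∈ Ioi i, (1 - y i * y j)) ^ 2 := by
  simp only [sq (y _)]
  exact prod_prod_eq_prod_diag_mul_sq_of_symm fun i j => by rw [mul_comm]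

/-- The product of `1 - e^α` over the roots `α = ±εᵢ ± εⱼ`, `i < j`, of the root system `D_k`,
where `e^{εᵢ} = y i`. -/
def rootProductD (y : ι → K) : K :=
  ∏ i, ∏ j ∈ Ioi i,
    (1 - y i / y j) * (1 - y j / y i) * ((1 - y i * y j) * (1 - (y i)⁻¹ * (y j)⁻¹))

theorem rootProductD_ne_zero {y : ι → K} (hy : ∀ i, y i ≠ 0) (hinj : Function.Injective y)
    (hmul : Pairwise fun i j => y i * y j ≠ 1) : rootProductD y ≠ 0 := by
  refine prod_ne_zero_iff.2 fun i _ => prod_ne_zero_iff.2 fun j hij => ?_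
  have hne : i ≠ j := (mem_Ioi.1 hij).ne
  simp only [← mul_inv, mul_ne_zero_iff, sub_ne_zero, ne_comm (a := (1 : K)), ne_eq,
    inv_eq_one, div_eq_one_iff_eq (hy _), hinj.eq_iff]
  exact ⟨⟨hne, hne.symm⟩, hmul hne, hmul hne⟩

theorem rootProductD_eq_prod_sq {y : ι → K} (hy : ∀ i, y i ≠ 0) :
    rootProductD y =
      (∏ i, ∏ j ∈ Ioi i, ((y j + (y j)⁻¹) - (y i + (y i)⁻¹))) ^ 2 := by
  simp only [rootProductD, ← prod_pow]
  refine prod_congr rfl fun i _ => prod_congr rfl fun j _ => ?_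
  have hi := hy i
  have hj := hy j
  field_simp
  ring

theorem det_sq_mul_prod {k : ℕ} {y : Fin k → K} (hy : ∀ i, y i ≠ 0) :
    (Matrix.of fun i j : Fin k => y i ^ (j : ℕ) + (y i)⁻¹ ^ ((j : ℕ) + 1)).det ^ 2 * ∏ i, y i =
      (∏ i, (1 + y i) * (1 + (y i)⁻¹)) * rootProductD y := by
  have hdiag : (∏ i, (1 + (y i)⁻¹)) ^ 2 * ∏ i, y i = ∏ i, (1 + y i) * (1 + (y i)⁻¹) := by
    rw [← prod_pow, ← prod_mul_distrib]
    refine prod_congr rfl fun i _ => ?_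
    linear_combination (1 + (y i)⁻¹) * mul_inv_cancel₀ (hy i)
  rw [det_pow_add_pow_succ fun i => mul_inv_cancel₀ (hy i), rootProductD_eq_prod_sq hy, ← hdiag]
  ring

end RootProduct

section MatchedValues

variable {K : Type*} [Field K] {k : ℕ}

/-- The values of `x₁, …, x_{2k}` under the substitution `x_e = y_e⁻¹`, `x_{k+e} = y_e` attached
to the matching `M₀`. -/
def matchedValues (y : Fin k → K) : Fin (2 * k) → K :=
  Fin.append y⁻¹ y ∘ Fin.cast (two_mul k)

@[simp] theorem matchedValues_lowerHalf (y : Fin k → K) (i : Fin k) :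
    matchedValues y (lowerHalf i) = (y i)⁻¹ :=
  Fin.append_left y⁻¹ y i

@[simp] theorem matchedValues_upperHalf (y : Fin k → K) (i : Fin k) :
    matchedValues y (upperHalf i) = y i :=
  Fin.append_right y⁻¹ y i

theorem prod_one_sub_matchedValues (y : Fin k → K) :
    ∏ i, (1 - matchedValues y i) = ∏ i, (1 - y i) * (1 - (y i)⁻¹) := by
  simp only [prod_univ_two_mul, matchedValues_lowerHalf, matchedValues_upperHalf,
    prod_mul_distrib, mul_comm]

theorem prod_lt_unmatched_matchedValues (y : Fin k → K) :
    ∏ p ∈ univ.filter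
        (fun p : Fin (2 * k) × Fin (2 * k) => p.1 < p.2 ∧ (p.1 : ℕ) + k ≠ (p.2 : ℕ)),
      (1 - matchedValues y p.1 * matchedValues y p.2) = rootProductD y := by
  rw [prod_lt_unmatched fun a b => 1 - matchedValues y a * matchedValues y b]
  simp only [matchedValues_lowerHalf, matchedValues_upperHalf,
    ← prod_prod_Ioi_mul_eq_prod_prod_off_diag fun j i => 1 - (y i)⁻¹ * y j, rootProductD,
    ← prod_mul_distrib]
  refine prod_congr rfl fun i _ => prod_congr rfl fun j _ => ?_
  ring

theorem prod_offDiag_one_sub_div_matchedValues (y : Fin k → K) :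
    ∏ p ∈ univ.offDiag, (1 - matchedValues y p.1 / matchedValues y p.2) =
      (∏ i, (1 - y i ^ 2) * (1 - (y i)⁻¹ ^ 2)) * rootProductD y ^ 2 := by
  have lower_lower : ∏ i, ∏ j ∈ {i}ᶜ, (1 - (y i)⁻¹ / (y j)⁻¹) =
      (∏ i, ∏ j ∈ Ioi i, (1 - y j / y i)) * ∏ i, ∏ j ∈ Ioi i, (1 - y i / y j) := by
    simpa only [Pi.inv_apply, inv_div_inv] using prod_prod_compl_one_sub_div y⁻¹
  have lower_upper : ∏ i, ∏ j, (1 - (y i)⁻¹ / y j) =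
      (∏ i, (1 - (y i)⁻¹ ^ 2)) * (∏ i, ∏ j ∈ Ioi i, (1 - (y i)⁻¹ * (y j)⁻¹)) ^ 2 := by
    simpa only [Pi.inv_apply, div_eq_mul_inv] using prod_prod_one_sub_mul y⁻¹
  rw [prod_offDiag_two_mul fun a b => 1 - matchedValues y a / matchedValues y b]
  simp only [matchedValues_lowerHalf, matchedValues_upperHalf]
  rw [lower_lower, lower_upper]
  simp only [div_inv_eq_mul]
  rw [prod_prod_one_sub_mul, prod_prod_compl_one_sub_div]
  simp only [rootProductD, prod_mul_distrib]
  ring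

end MatchedValues

theorem stmt_11_general {K : Type*} [Field K] {k : ℕ} (y : Fin k → K) (hy : ∀ i, y i ≠ 0)
    (hy_one : ∀ i, y i ≠ 1) (hinj : Function.Injective y)
    (hmul : Pairwise fun i j => y i * y j ≠ 1) :
    (∏ p ∈ (univ : Finset (Fin (2 * k))).offDiag,
        (1 - matchedValues y p.1 / matchedValues y p.2)) /
      ((∏ i : Fin (2 * k), (1 - matchedValues y i)) *
        ∏ p ∈ univ.filter
            (fun p : Fin (2 * k) × Fin (2 * k) => p.1 < p.2 ∧ (p.1 : ℕ) + k ≠ (p.2 : ℕ)),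
          (1 - matchedValues y p.1 * matchedValues y p.2)) =
      (Matrix.of fun i j : Fin k => y i ^ (j : ℕ) + (y i)⁻¹ ^ ((j : ℕ) + 1)).det ^ 2 *
        ∏ i, y i := by
  have hdiag : ∏ i, (1 - y i) * (1 - (y i)⁻¹) ≠ 0 :=
    prod_ne_zero_iff.2 fun i _ => by
      simp [sub_eq_zero, eq_comm (a := (1 : K)), hy_one i]
  have hroot : rootProductD y ≠ 0 := rootProductD_ne_zero hy hinj hmul
  have hsq : ∏ i, (1 - y i ^ 2) * (1 - (y i)⁻¹ ^ 2) =
      (∏ i, (1 + y i) * (1 + (y i)⁻¹)) * ∏ i, (1 - y i) * (1 - (y i)⁻¹) := by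
    rw [← prod_mul_distrib]
    exact prod_congr rfl fun i _ => by ring
  rw [prod_offDiag_one_sub_div_matchedValues, prod_one_sub_matchedValues,
    prod_lt_unmatched_matchedValues, det_sq_mul_prod hy, div_eq_iff (mul_ne_zero hdiag hroot), hsq]
  ring

section Indeterminates

theorem algebraMap_ne_one_of_constantCoeff_eq_zero {σ R A : Type*} [CommSemiring R] [Nontrivial R]
    [CommSemiring A] [Algebra (MvPolynomial σ R) A] [FaithfulSMul (MvPolynomial σ R) A]
    {p : MvPolynomial σ R} (hp : MvPolynomial.constantCoeff p = 0) :
    algebraMap (MvPolynomial σ R) A p ≠ 1 := by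
  rw [Ne, FaithfulSMul.algebraMap_eq_one_iff]
  rintro rfl
  simp at hp

variable {n : ℕ}

theorem xF_injective : Function.Injective (xF n) :=
  (IsFractionRing.injective (MvPolynomial (Fin n) ℚ) _).comp MvPolynomial.X_injective

theorem xF_ne_zero (i : Fin n) : xF n i ≠ 0 :=
  IsFractionRing.to_map_eq_zero_iff.not.2 (MvPolynomial.X_ne_zero i)

theorem xF_ne_one (i : Fin n) : xF n i ≠ 1 :=
  algebraMap_ne_one_of_constantCoeff_eq_zero (MvPolynomial.constantCoeff_X ℚ i)

theorem xF_mul_xF_ne_one (i j : Fin n) : xF n i * xF n j ≠ 1 := by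
  rw [xF, xF, ← map_mul]
  exact algebraMap_ne_one_of_constantCoeff_eq_zero (by simp)

theorem v11_eq_matchedValues (k : ℕ) :
    v11 k = matchedValues fun i => xF (2 * k) (upperHalf i) := by
  funext i
  by_cases hi : (i : ℕ) < k
  · obtain ⟨j, rfl⟩ : ∃ j, lowerHalf j = i := ⟨⟨i, hi⟩, rfl⟩
    rw [matchedValues_lowerHalf, v11, dif_pos hi]
    congr 2
    exact Fin.ext (add_comm _ _)
  · obtain ⟨j, rfl⟩ : ∃ j, upperHalf j = i :=
      ⟨⟨i - k, by omega⟩, Fin.ext (Nat.add_sub_of_le (not_lt.1 hi))⟩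
    rw [matchedValues_upperHalf, v11, dif_neg hi]

end Indeterminates

/-- **Lemma 7 (even case).**  Let `n = 2k` and let `Q` be gratifying with
`P = 1`.  For the complete matching `M₀ = {{1,k+1},…,{k,2k}}`, the rational
function `Q_{M₀} = Q·∏_{e=1}^k (1-x_e x_{k+e})` evaluated at `x_e = x_{k+e}⁻¹`
(after cancelling the indicated denominator factors, i.e. the surviving
factors `(1-xᵢxⱼ)` are those with `{i,j}` not a block of `M₀`) satisfies
`Q_{M₀} = B̄_k(x_{k+1},…,x_{2k})² · x_{k+1}⋯x_{2k}`, where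
`B̄_k(x) = det(xᵢ^{j-1} + xᵢ^{-j})_{1≤i,j≤k}` (below `j` is `0`-based, so the
entries read `x_{k+i}^j + x_{k+i}^{-(j+1)}`). -/
theorem stmt_11 (k : ℕ) (hk : 1 ≤ k) :
    (∏ p ∈ (univ : Finset (Fin (2 * k))).offDiag,
        (1 - v11 k p.1 / v11 k p.2)) /
      ((∏ i : Fin (2 * k), (1 - v11 k i)) *
        ∏ p ∈ univ.filter
            (fun p : Fin (2 * k) × Fin (2 * k) => p.1 < p.2 ∧ (p.1 : ℕ) + k ≠ (p.2 : ℕ)),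
          (1 - v11 k p.1 * v11 k p.2))
    = Matrix.det (Matrix.of fun i j : Fin k =>
          xF (2 * k) (Fin.castLE (by omega) (Fin.natAdd k i)) ^ (j : ℕ) +
            (xF (2 * k) (Fin.castLE (by omega) (Fin.natAdd k i)))⁻¹ ^ ((j : ℕ) + 1)) ^ 2 *
        ∏ i : Fin k, xF (2 * k) (Fin.castLE (by omega) (Fin.natAdd k i)) := by
  rw [v11_eq_matchedValues]
  exact stmt_11_general _ (fun _ => xF_ne_zero _) (fun _ => xF_ne_one _)
    (xF_injective.comp upperHalf_injective) fun _ _ _ => xF_mul_xF_ne_one _ _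
end

section
/- For all integers k ≥ 1 and m ≥ 0, det( C(2m, m+1−i−j) + C(2m, m−i+j) )_{1≤i,j≤k} = ∏_{j=0}^{2k−1} ∏_{i=1}^{m} (2i+j)/(i+j). -/
/-!
Extend the entries `A m i j` to all integers `i`, `j`. The two summands are exchanged by the
reflection `i ↦ -1 - i`, and passing from `m` to `m + 1` is the three-term recurrence
`A (m + 1) i j = A m (i + 1) j + 2 A m i j + A m (i - 1) j`. Hence row `i` is `pᵢ(S)` applied to
row `0`, where `S` is the shift of `m` and `pᵢ` is monic of degree `i`, and likewise for columns. So
the determinant equals the Hankel determinant with entries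
`A (m + i + j) 0 0 = C(2(m + i + j) + 2, m + i + j + 1) / 2`.

Up to powers of `4` these numbers are moments `(a)ₙ / (b)ₙ` of a Beta distribution, with
`a = m + 3/2` and `b = m + 2`. Subtracting from each column a multiple of its predecessor
reduces the Hankel determinant of such moments to the one of size one less with parameters
`(a + 1, b + 2)`.
-/

open Finset

/-- The binomial coefficient `C(N, r)` for an integer `r`, with the convention
that it vanishes for `r < 0` (and, via `Nat.choose`, for `r > N`). -/
def binQ (N : ℕ) (r : ℤ) : ℚ :=
  if 0 ≤ r then (N.choose r.toNat : ℚ) else 0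

section ThreeTermRecurrence

open Polynomial

variable {R : Type*} [CommRing R]

/-- The monic orthogonal polynomials with recurrence coefficients `b` and `c`. The coefficients are
indexed so that `p (n + 2) = (X - b (n + 1)) p (n + 1) - c n p n`. -/
noncomputable def threeTermPoly (b c : ℕ → R) : ℕ → R[X]
  | 0 => 1
  | 1 => X - C (b 0)
  | n + 2 => (X - C (b (n + 1))) * threeTermPoly b c (n + 1) - C (c n) * threeTermPoly b c n

lemma threeTermPoly_monic_and_natDegree [Nontrivial R] (b c : ℕ → R) (n : ℕ) :
    (threeTermPoly b c n).Monic ∧ (threeTermPoly b c n).natDegree = n := by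
  induction n using Nat.twoStepInduction with
  | zero => simp [threeTermPoly]
  | one => exact ⟨monic_X_sub_C _, natDegree_X_sub_C _⟩
  | more n ih₀ ih₁ =>
    obtain ⟨-, natDegree₀⟩ := ih₀
    obtain ⟨monic₁, natDegree₁⟩ := ih₁
    have monic_lead : ((X - C (b (n + 1))) * threeTermPoly b c (n + 1)).Monic :=
      (monic_X_sub_C _).mul monic₁
    have natDegree_lead : ((X - C (b (n + 1))) * threeTermPoly b c (n + 1)).natDegree = n + 2 := by
      rw [(monic_X_sub_C _).natDegree_mul monic₁, natDegree_X_sub_C, natDegree₁]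
      ring
    have natDegree_lt : (C (c n) * threeTermPoly b c n).natDegree <
        ((X - C (b (n + 1))) * threeTermPoly b c (n + 1)).natDegree := by
      have := natDegree_C_mul_le (c n) (threeTermPoly b c n)
      omega
    exact ⟨monic_lead.sub_of_left (degree_lt_degree natDegree_lt),
      (natDegree_sub_eq_left_of_natDegree_lt natDegree_lt).trans natDegree_lead⟩

lemma eq_aeval_threeTermPoly {M : Type*} [AddCommGroup M] [Module R M] (f : Module.End R M)
    (b c : ℕ → R) (v : ℕ → M) (h₀ : f (v 0) = v 1 + b 0 • v 0)
    (h : ∀ i, f (v (i + 1)) = v (i + 2) + b (i + 1) • v (i + 1) + c i • v i) (i : ℕ) :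
    v i = aeval f (threeTermPoly b c i) (v 0) := by
  induction i using Nat.twoStepInduction with
  | zero => simp [threeTermPoly]
  | one => simp [threeTermPoly, h₀, Module.algebraMap_end_apply]
  | more i ih₀ ih₁ =>
    simp only [threeTermPoly, map_sub, map_mul, aeval_X, aeval_C, LinearMap.sub_apply,
      Module.End.mul_apply, Module.algebraMap_end_apply, ← ih₀, ← ih₁, h]
    abel

lemma det_eq_det_pow_of_three_term_recurrence {M : Type*} [AddCommGroup M] [Module R M]
    (f : Module.End R M) (b c : ℕ → R) (v : ℕ → M) (h₀ : f (v 0) = v 1 + b 0 • v 0)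
    (h : ∀ i, f (v (i + 1)) = v (i + 2) + b (i + 1) • v (i + 1) + c i • v i)
    {k : ℕ} (φ : Fin k → M →ₗ[R] R) :
    (Matrix.of fun i j : Fin k => φ j (v i)).det =
      (Matrix.of fun i j : Fin k => φ j ((f ^ (i : ℕ)) (v 0))).det := by
  nontriviality R
  set T : Matrix (Fin k) (Fin k) R := Matrix.of fun n i => (threeTermPoly b c i).coeff n
  have det_T : T.det = 1 := Matrix.det_matrixOfPolynomials (fun i => threeTermPoly b c i)
    (fun i => (threeTermPoly_monic_and_natDegree b c i).2)
    (fun i => (threeTermPoly_monic_and_natDegree b c i).1)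
  have factorization : (Matrix.of fun i j : Fin k => φ j (v i)) =
      T.transpose * Matrix.of fun i j : Fin k => φ j ((f ^ (i : ℕ)) (v 0)) := by
    ext i j
    have natDegree_lt : (threeTermPoly b c i).natDegree < k :=
      (threeTermPoly_monic_and_natDegree b c i).2.trans_lt i.isLt
    rw [Matrix.of_apply, eq_aeval_threeTermPoly f b c v h₀ h i, aeval_eq_sum_range' natDegree_lt,
      ← Fin.sum_univ_eq_sum_range fun n => (threeTermPoly b c i).coeff n • f ^ n]
    simp [T, Matrix.mul_apply]
  rw [factorization, Matrix.det_mul, Matrix.det_transpose, det_T, one_mul]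

lemma det_eq_det_shift_of_three_term_recurrence (b c : ℕ → R) (A : ℕ → ℕ → ℕ → R)
    (h₀ : ∀ m j, A (m + 1) 0 j = A m 1 j + b 0 * A m 0 j)
    (h : ∀ m i j, A (m + 1) (i + 1) j = A m (i + 2) j + b (i + 1) * A m (i + 1) j + c i * A m i j)
    (k : ℕ) (m : Fin k → ℕ) :
    (Matrix.of fun i j : Fin k => A (m j) i j).det =
      (Matrix.of fun i j : Fin k => A (m j + i) 0 j).det := by
  let shift : Module.End R (ℕ → ℕ → R) := LinearMap.funLeft R (ℕ → R) Nat.succ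
  have shift_pow_apply (n : ℕ) (g : ℕ → ℕ → R) (m : ℕ) : (shift ^ n) g m = g (m + n) := by
    induction n generalizing m with
    | zero => rfl
    | succ n ih =>
      rw [pow_succ', Module.End.mul_apply, LinearMap.funLeft_apply, ih, Nat.succ_add, Nat.add_succ]
  have key := det_eq_det_pow_of_three_term_recurrence shift b c (fun i m => A m i)
    (by ext m j; exact h₀ m j) (by intro i; ext m j; exact h m i j)
    (fun j : Fin k => LinearMap.proj (j : ℕ) ∘ₗ LinearMap.proj (m j))
  simpa [shift_pow_apply] using key

theorem det_eq_det_hankel_of_three_term_recurrence (b c : ℕ → R) (A : ℕ → ℕ → ℕ → R)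
    (symm : ∀ m j, A m 0 j = A m j 0)
    (h₀ : ∀ m j, A (m + 1) 0 j = A m 1 j + b 0 * A m 0 j)
    (h : ∀ m i j, A (m + 1) (i + 1) j = A m (i + 2) j + b (i + 1) * A m (i + 1) j + c i * A m i j)
    (k m : ℕ) :
    (Matrix.of fun i j : Fin k => A m i j).det =
      (Matrix.of fun i j : Fin k => A (m + (i + j)) 0 0).det := by
  calc (Matrix.of fun i j : Fin k => A m i j).det
      = (Matrix.of fun i j : Fin k => A (m + i) 0 j).det :=
        det_eq_det_shift_of_three_term_recurrence b c A h₀ h k fun _ => m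
    _ = (Matrix.of fun i j : Fin k => A (m + j) i 0).det := by
        rw [← Matrix.det_transpose]
        simp only [symm]
        rfl
    _ = (Matrix.of fun i j : Fin k => A (m + (i + j)) 0 0).det := by
        have key := det_eq_det_shift_of_three_term_recurrence b c (fun m i _ => A m i 0)
          (fun m _ => h₀ m 0) (fun m i _ => h m i 0) k fun j => m + j
        simpa only [add_comm, add_left_comm, add_assoc] using key

end ThreeTermRecurrence

section BetaMoment

open Polynomial

lemma ascPochhammer_succ_eval_left {S : Type*} [CommSemiring S] (n : ℕ) (a : S) :
    (ascPochhammer S (n + 1)).eval a = a * (ascPochhammer S n).eval (a + 1) := by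
  simp [ascPochhammer_succ_left, eval_comp]

variable {K : Type*} [Field K]

lemma ascPochhammer_eval_ne_zero {b : K} (hb : ∀ n : ℕ, b + n ≠ 0) (n : ℕ) :
    (ascPochhammer K n).eval b ≠ 0 := by
  induction n with
  | zero => simp
  | succ n ih =>
    rw [ascPochhammer_succ_eval]
    exact mul_ne_zero ih (hb n)

/-- The `n`-th moment `(a)ₙ / (b)ₙ` of the Beta distribution with parameters `a` and `b - a`, for
arbitrary elements `a`, `b` of a field. -/
noncomputable def betaMoment (a b : K) (n : ℕ) : K :=
  (ascPochhammer K n).eval a / (ascPochhammer K n).eval b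

lemma betaMoment_zero (a b : K) : betaMoment a b 0 = 1 := by simp [betaMoment]

lemma betaMoment_succ (a b : K) (n : ℕ) :
    betaMoment a b (n + 1) = betaMoment a b n * ((a + n) / (b + n)) := by
  simp only [betaMoment, ascPochhammer_succ_eval, mul_div_mul_comm]

lemma betaMoment_succ_left {a b : K} (hb : ∀ n : ℕ, b + n ≠ 0) (n : ℕ) :
    betaMoment a b (n + 1) = a * (b + n + 1) / (b * (b + 1)) * betaMoment (a + 1) (b + 2) n := by
  have hb₀ : b ≠ 0 := by simpa using hb 0
  have hb₁ : b + 1 ≠ 0 := by simpa using hb 1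
  have hbn : b + n + 1 ≠ 0 := by simpa [add_assoc] using hb (n + 1)
  have poch_ne_zero : (ascPochhammer K n).eval (b + 2) ≠ 0 :=
    ascPochhammer_eval_ne_zero (fun l => by convert hb (l + 2) using 1; push_cast; ring) n
  have poch_b : (ascPochhammer K (n + 1)).eval b * (b + n + 1) =
      b * ((b + 1) * (ascPochhammer K n).eval (b + 2)) := by
    have := ascPochhammer_succ_eval (n + 1) b
    rw [ascPochhammer_succ_eval_left, ascPochhammer_succ_eval_left, add_assoc b 1 1,
      one_add_one_eq_two] at this
    rw [this]
    push_cast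
    ring
  rw [betaMoment, betaMoment, ascPochhammer_succ_eval_left n a, eq_div_of_mul_eq hbn poch_b]
  field_simp

lemma betaMoment_sub_mul_pred {a b : K} (hb : ∀ n : ℕ, b + n ≠ 0) (i j : ℕ) :
    betaMoment a b (i + 1 + (j + 1)) - (a + j) / (b + j) * betaMoment a b (i + 1 + j) =
      (i + 1) * ((b - a) / (b + j) * (a / (b * (b + 1))) * betaMoment (a + 1) (b + 2) (i + j)) := by
  have hbj := hb j
  have hbij : b + (i + j : ℕ) + 1 ≠ 0 := by simpa [add_assoc] using hb (i + j + 1)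
  have ratio_sub : (a + (i + j + 1 : ℕ)) / (b + (i + j + 1 : ℕ)) - (a + j) / (b + j) =
      (i + 1) * (b - a) / ((b + (i + j : ℕ) + 1) * (b + j)) := by
    rw [div_sub_div _ _ (hb _) hbj]
    push_cast
    ring
  calc betaMoment a b (i + 1 + (j + 1)) - (a + j) / (b + j) * betaMoment a b (i + 1 + j)
      = betaMoment a b (i + j + 1) *
          ((a + (i + j + 1 : ℕ)) / (b + (i + j + 1 : ℕ)) - (a + j) / (b + j)) := by
        rw [← add_assoc, betaMoment_succ, add_right_comm i 1 j]
        ring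
    _ = (i + 1) *
          ((b - a) / (b + j) * (a / (b * (b + 1))) * betaMoment (a + 1) (b + 2) (i + j)) := by
        rw [ratio_sub, betaMoment_succ_left hb]
        field_simp

lemma det_hankel_betaMoment_succ {a b : K} (hb : ∀ n : ℕ, b + n ≠ 0) (k : ℕ) :
    (Matrix.of fun i j : Fin (k + 1) => betaMoment a b (i + j)).det =
      (∏ r ∈ range k, ((r + 1) * ((b - a) / (b + r) * (a / (b * (b + 1)))))) *
        (Matrix.of fun i j : Fin k => betaMoment (a + 1) (b + 2) (i + j)).det := by
  let ratio : Fin k → K := fun j => (a + j) / (b + j)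
  let reduced : Matrix (Fin (k + 1)) (Fin (k + 1)) K := Matrix.of fun i =>
    Fin.cases (betaMoment a b i) fun j =>
      betaMoment a b (i + (j + 1)) - ratio j * betaMoment a b (i + j)
  have det_eq_det_reduced :
      (Matrix.of fun i j : Fin (k + 1) => betaMoment a b (i + j)).det = reduced.det :=
    Matrix.det_eq_of_forall_col_eq_smul_add_pred ratio (by simp [reduced]) (by simp [reduced])
  have reduced_zero_zero : reduced 0 0 = 1 := by simp [reduced, betaMoment_zero]
  have reduced_zero_succ (j : Fin k) : reduced 0 j.succ = 0 := by
    simp [reduced, ratio, betaMoment_succ, mul_comm]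
  have reduced_minor : reduced.submatrix Fin.succ (Fin.succAbove 0) = Matrix.of fun i j : Fin k =>
      ((i : ℕ) + 1 : K) * (Matrix.of fun i j : Fin k =>
        (b - a) / (b + (j : ℕ)) * (a / (b * (b + 1))) *
          (Matrix.of fun i j : Fin k => betaMoment (a + 1) (b + 2) (i + j)) i j) i j := by
    ext i j
    simp only [Matrix.submatrix_apply, Matrix.of_apply, Fin.succAbove_zero, reduced, ratio,
      Fin.cases_succ, Fin.val_succ]
    exact betaMoment_sub_mul_pred hb i j
  have det_reduced : reduced.det = (reduced.submatrix Fin.succ (Fin.succAbove 0)).det := by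
    rw [Matrix.det_succ_row_zero, Fin.sum_univ_succ]
    simp [reduced_zero_zero, reduced_zero_succ]
  rw [det_eq_det_reduced, det_reduced, reduced_minor,
    Matrix.det_mul_column fun i : Fin k => ((i : ℕ) + 1 : K),
    Matrix.det_mul_row fun j : Fin k => (b - a) / (b + (j : ℕ)) * (a / (b * (b + 1))),
    Fin.prod_univ_eq_prod_range fun i => (i + 1 : K),
    Fin.prod_univ_eq_prod_range fun j => (b - a) / (b + j) * (a / (b * (b + 1))),
    ← mul_assoc, ← prod_mul_distrib]

/-- The `r`-th pivot of the Hankel matrix of the moments `betaMoment a b`, that is, the squared norm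
of the `r`-th monic orthogonal (Jacobi) polynomial. -/
noncomputable def betaPivot (a b : K) (r : ℕ) : K :=
  r.factorial * (ascPochhammer K r).eval a * (ascPochhammer K r).eval (b - a) /
    ((ascPochhammer K (2 * r)).eval b * (ascPochhammer K r).eval (b + r - 1))

lemma betaPivot_zero (a b : K) : betaPivot a b 0 = 1 := by simp [betaPivot]

lemma betaPivot_succ (a b : K) (r : ℕ) :
    betaPivot a b (r + 1) =
      (r + 1) * ((b - a) / (b + r) * (a / (b * (b + 1)))) * betaPivot (a + 1) (b + 2) r := by
  have poch_sub : (ascPochhammer K (r + 1)).eval (b - a) =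
      (b - a) * (ascPochhammer K r).eval (b + 2 - (a + 1)) := by
    rw [ascPochhammer_succ_eval_left]
    ring_nf
  have poch_b : (ascPochhammer K (2 * (r + 1))).eval b =
      b * (b + 1) * (ascPochhammer K (2 * r)).eval (b + 2) := by
    rw [mul_add_one, ascPochhammer_succ_eval_left, ascPochhammer_succ_eval_left, ← mul_assoc]
    ring_nf
  have poch_last : (ascPochhammer K (r + 1)).eval (b + (r + 1 : ℕ) - 1) =
      (b + r) * (ascPochhammer K r).eval (b + 2 + r - 1) := by
    rw [ascPochhammer_succ_eval_left]
    push_cast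
    ring_nf
  rw [betaPivot, poch_sub, poch_b, poch_last, ascPochhammer_succ_eval_left, Nat.factorial_succ,
    betaPivot]
  push_cast
  simp only [div_eq_mul_inv, mul_inv]
  ring

theorem det_hankel_betaMoment {a b : K} (hb : ∀ n : ℕ, b + n ≠ 0) (k : ℕ) :
    (Matrix.of fun i j : Fin k => betaMoment a b (i + j)).det =
      ∏ r ∈ range k, betaPivot a b r := by
  induction k generalizing a b with
  | zero => simp
  | succ k ih =>
    have hb₂ (n : ℕ) : b + 2 + n ≠ 0 := by
      convert hb (n + 2) using 1
      push_cast
      ring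
    rw [det_hankel_betaMoment_succ hb, ih hb₂, ← prod_mul_distrib, prod_range_succ',
      betaPivot_zero, mul_one]
    exact prod_congr rfl fun r _ => (betaPivot_succ a b r).symm

end BetaMoment

section CentralBinom

open Polynomial

variable {K : Type*} [Field K] [CharZero K]

lemma centralBinom_add_eq_mul_betaMoment (m n : ℕ) :
    ((m + n).centralBinom : K) =
      m.centralBinom * (4 ^ n * betaMoment (m + 1 / 2 : K) (m + 1) n) := by
  induction n with
  | zero => simp [betaMoment_zero]
  | succ n ih =>
    have recurrence : ((m + n + 1 : ℕ) : K) * (m + (n + 1)).centralBinom =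
        2 * (2 * (m + n : ℕ) + 1) * (m + n).centralBinom := by
      exact_mod_cast Nat.succ_mul_centralBinom_succ (m + n)
    have ne_zero : (m : K) + n + 1 ≠ 0 := by exact_mod_cast (m + n).succ_ne_zero
    rw [ih] at recurrence
    rw [betaMoment_succ, add_right_comm (m : K) 1]
    apply mul_left_cancel₀ ne_zero
    push_cast at recurrence
    rw [recurrence]
    field_simp
    ring

theorem det_hankel_centralBinom (k m : ℕ) :
    (Matrix.of fun i j : Fin k => ((m + (i + j)).centralBinom : K)).det =
      ∏ r ∈ range k, m.centralBinom * 16 ^ r * betaPivot (m + 1 / 2 : K) (m + 1) r := by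
  have scaling : (Matrix.of fun i j : Fin k => ((m + (i + j)).centralBinom : K)) =
      Matrix.of fun i j : Fin k => (m.centralBinom * 4 ^ (i : ℕ) : K) *
        (Matrix.of fun i j : Fin k => (4 : K) ^ (j : ℕ) *
          (Matrix.of fun i j : Fin k => betaMoment (m + 1 / 2 : K) (m + 1) (i + j)) i j) i j := by
    ext i j
    simp only [Matrix.of_apply, centralBinom_add_eq_mul_betaMoment m, pow_add]
    ring
  have hb (n : ℕ) : (m + 1 + n : K) ≠ 0 := by exact_mod_cast (by omega : m + 1 + n ≠ 0)
  rw [scaling, Matrix.det_mul_column fun i : Fin k => (m.centralBinom * 4 ^ (i : ℕ) : K),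
    Matrix.det_mul_row fun j : Fin k => (4 : K) ^ (j : ℕ), det_hankel_betaMoment hb,
    Fin.prod_univ_eq_prod_range fun i => (m.centralBinom * 4 ^ i : K),
    Fin.prod_univ_eq_prod_range fun j => (4 : K) ^ j, ← prod_mul_distrib, ← prod_mul_distrib]
  refine prod_congr rfl fun r _ => ?_
  rw [show (16 : K) = 4 * 4 by norm_num, mul_pow]
  ring

lemma natCast_factorial_ne_zero (n : ℕ) : (n.factorial : K) ≠ 0 :=
  Nat.cast_ne_zero.mpr n.factorial_ne_zero

lemma natCast_centralBinom_eq_factorial_div (n : ℕ) :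
    (n.centralBinom : K) = (2 * n).factorial / (n.factorial * n.factorial) := by
  rw [Nat.centralBinom_eq_two_mul_choose, Nat.cast_choose K (by omega), two_mul,
    Nat.add_sub_cancel]

lemma ascPochhammer_eval_natCast_add_one (m n : ℕ) :
    (ascPochhammer K n).eval (m + 1 : K) = (m + n).factorial / m.factorial := by
  rw [eq_div_iff (natCast_factorial_ne_zero m), mul_comm, factorial_mul_ascPochhammer]

lemma four_pow_mul_factorial_mul_ascPochhammer_eval_half (r : ℕ) :
    4 ^ r * r.factorial * (ascPochhammer K r).eval (1 / 2 : K) = (2 * r).factorial := by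
  have factorial_ne_zero := natCast_factorial_ne_zero (K := K) r
  have key := centralBinom_add_eq_mul_betaMoment (K := K) 0 r
  rw [zero_add, betaMoment, Nat.cast_zero, zero_add, zero_add, ascPochhammer_eval_one,
    Nat.centralBinom_zero, Nat.cast_one, one_mul, natCast_centralBinom_eq_factorial_div,
    div_eq_iff (mul_ne_zero factorial_ne_zero factorial_ne_zero)] at key
  rw [key]
  field_simp

lemma centralBinom_mul_betaPivot (m r : ℕ) :
    ((m + 1).centralBinom : K) * 16 ^ r *
        betaPivot ((m + 1 : ℕ) + 1 / 2 : K) ((m + 1 : ℕ) + 1) r =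
      2 * ((2 * r).factorial * (2 * m + 2 * r + 1).factorial /
        ((m + 2 * r).factorial * (m + 2 * r + 1).factorial)) := by
  have factorial_ne_zero := natCast_factorial_ne_zero (K := K)
  have key := centralBinom_add_eq_mul_betaMoment (K := K) (m + 1) r
  rw [betaMoment, ascPochhammer_eval_natCast_add_one, ← mul_assoc, ← mul_div_assoc,
    eq_div_iff (div_ne_zero (factorial_ne_zero _) (factorial_ne_zero _))] at key
  have poch_b := ascPochhammer_eval_natCast_add_one (K := K) (m + 1) (2 * r)
  have poch_last := ascPochhammer_eval_natCast_add_one (K := K) (m + r) r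
  have half := four_pow_mul_factorial_mul_ascPochhammer_eval_half (K := K) r
  have sub_half : ((m + 1 : ℕ) + 1 - ((m + 1 : ℕ) + 1 / 2) : K) = 1 / 2 := by ring
  have last : ((m + 1 : ℕ) + 1 + r - 1 : K) = (m + r : ℕ) + 1 := by push_cast; ring
  calc ((m + 1).centralBinom : K) * 16 ^ r *
        betaPivot ((m + 1 : ℕ) + 1 / 2 : K) ((m + 1 : ℕ) + 1) r
      = ((m + 1).centralBinom * 4 ^ r * (ascPochhammer K r).eval ((m + 1 : ℕ) + 1 / 2 : K)) *
          (4 ^ r * r.factorial * (ascPochhammer K r).eval (1 / 2 : K)) /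
          ((ascPochhammer K (2 * r)).eval ((m + 1 : ℕ) + 1 : K) *
            (ascPochhammer K r).eval ((m + r : ℕ) + 1 : K)) := by
        rw [betaPivot, sub_half, last, show (16 : K) = 4 * 4 by norm_num, mul_pow]
        ring
    _ = _ := by
        rw [← key, half, poch_b, poch_last, natCast_centralBinom_eq_factorial_div,
          show m + 1 + r = m + r + 1 by ring, show m + 1 + 2 * r = m + 2 * r + 1 by ring,
          show m + r + r = m + 2 * r by ring,
          show 2 * (m + r + 1) = 2 * m + 2 * r + 1 + 1 by ring,
          Nat.factorial_succ (2 * m + 2 * r + 1), Nat.factorial_succ (m + r)]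
        have : (m + r + 1 : K) ≠ 0 := by exact_mod_cast (m + r).succ_ne_zero
        push_cast
        field_simp [factorial_ne_zero]
        ring

lemma prod_range_two_mul {M : Type*} [CommMonoid M] (f : ℕ → M) (k : ℕ) :
    ∏ j ∈ range (2 * k), f j = ∏ r ∈ range k, f (2 * r) * f (2 * r + 1) := by
  induction k with
  | zero => simp
  | succ k ih => rw [mul_add_one, prod_range_succ, prod_range_succ, ih, prod_range_succ, mul_assoc]

lemma prod_Icc_even_mul_prod_Icc_odd (m r : ℕ) :
    (∏ i ∈ Icc 1 m, ((2 * i + 2 * r : ℕ) : K) / ((i + 2 * r : ℕ) : K)) *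
        ∏ i ∈ Icc 1 m, ((2 * i + (2 * r + 1) : ℕ) : K) / ((i + (2 * r + 1) : ℕ) : K) =
      (2 * r).factorial * (2 * m + 2 * r + 1).factorial /
        ((m + 2 * r).factorial * (m + 2 * r + 1).factorial) := by
  have factorial_ne_zero := natCast_factorial_ne_zero (K := K)
  induction m with
  | zero => simp [div_self, factorial_ne_zero]
  | succ m ih =>
    have ne_zero : (m + 2 * r + 1 : K) ≠ 0 := by exact_mod_cast (m + 2 * r).succ_ne_zero
    have succ_ne_zero : (m + 2 * r + 1 + 1 : K) ≠ 0 := by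
      exact_mod_cast (m + 2 * r + 1).succ_ne_zero
    rw [prod_Icc_succ_top (by omega), prod_Icc_succ_top (by omega), mul_mul_mul_comm, ih,
      show 2 * (m + 1) + 2 * r + 1 = 2 * m + 2 * r + 1 + 1 + 1 by ring,
      show m + 1 + 2 * r = m + 2 * r + 1 by ring, Nat.factorial_succ (m + 2 * r + 1),
      Nat.factorial_succ (2 * m + 2 * r + 1 + 1), Nat.factorial_succ (2 * m + 2 * r + 1),
      Nat.factorial_succ (m + 2 * r),
      show m + 1 + (2 * r + 1) = m + 2 * r + 1 + 1 by ring]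
    push_cast
    field_simp [factorial_ne_zero]
    ring

theorem det_hankel_half_centralBinom (k m : ℕ) :
    (Matrix.of fun i j : Fin k => ((m + 1 + (i + j)).centralBinom : K) / 2).det =
      ∏ j ∈ range (2 * k), ∏ i ∈ Icc 1 m, ((2 * i + j : ℕ) : K) / ((i + j : ℕ) : K) := by
  have halve : (Matrix.of fun i j : Fin k => ((m + 1 + (i + j)).centralBinom : K) / 2) =
      (1 / 2 : K) • Matrix.of fun i j : Fin k => ((m + 1 + (i + j)).centralBinom : K) := by
    ext i j
    simp only [Matrix.of_apply, Matrix.smul_apply, smul_eq_mul]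
    ring
  rw [halve, Matrix.det_smul, det_hankel_centralBinom, prod_range_two_mul, Fintype.card_fin,
    pow_eq_prod_const, ← prod_mul_distrib]
  refine prod_congr rfl fun r _ => ?_
  rw [centralBinom_mul_betaPivot, prod_Icc_even_mul_prod_Icc_odd]
  ring

end CentralBinom

section CenteredBinom

lemma binQ_natCast (N r : ℕ) : binQ N r = N.choose r := by simp [binQ]

lemma binQ_of_neg (N : ℕ) {r : ℤ} (hr : r < 0) : binQ N r = 0 := if_neg hr.not_ge

lemma binQ_of_lt {N : ℕ} {r : ℤ} (hr : N < r) : binQ N r = 0 := by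
  lift r to ℕ using by omega
  rw [binQ_natCast, Nat.choose_eq_zero_of_lt (by omega), Nat.cast_zero]

lemma binQ_succ (N : ℕ) (r : ℤ) : binQ (N + 1) r = binQ N r + binQ N (r - 1) := by
  rcases lt_or_ge r 0 with r_neg | r_nonneg
  · rw [binQ_of_neg _ r_neg, binQ_of_neg _ r_neg, binQ_of_neg _ (by omega), add_zero]
  · lift r to ℕ using r_nonneg
    cases r with
    | zero => simp [binQ]
    | succ r =>
      rw [Nat.cast_succ, add_sub_cancel_right, ← Nat.cast_succ, binQ_natCast, binQ_natCast,
        binQ_natCast, Nat.choose_succ_succ, Nat.cast_add, add_comm]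

lemma binQ_symm {N : ℕ} {r s : ℤ} (h : r + s = N) : binQ N r = binQ N s := by
  rcases lt_or_ge r 0 with r_neg | r_nonneg
  · rw [binQ_of_neg _ r_neg, binQ_of_lt (by omega)]
  rcases lt_or_ge s 0 with s_neg | s_nonneg
  · rw [binQ_of_lt (by omega), binQ_of_neg _ s_neg]
  lift r to ℕ using r_nonneg
  lift s to ℕ using s_nonneg
  rw [binQ_natCast, binQ_natCast, Nat.choose_symm_of_eq_add (by omega : N = r + s)]

/-- The binomial coefficient `C(2 * n, n + r)`, which is an even function of the integer `r`. -/
def centeredBinom (n : ℕ) (r : ℤ) : ℚ := binQ (2 * n) (n + r)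

lemma centeredBinom_zero_right (n : ℕ) : centeredBinom n 0 = n.centralBinom := by
  simp [centeredBinom, binQ, Nat.centralBinom_eq_two_mul_choose]

lemma centeredBinom_neg (n : ℕ) (r : ℤ) : centeredBinom n (-r) = centeredBinom n r :=
  binQ_symm (by push_cast; ring)

lemma centeredBinom_succ (n : ℕ) (r : ℤ) :
    centeredBinom (n + 1) r =
      centeredBinom n (r + 1) + 2 * centeredBinom n r + centeredBinom n (r - 1) := by
  simp only [centeredBinom, mul_add_one, binQ_succ]
  push_cast
  ring_nf

/-- The entries of the determinant: the centered binomial coefficient at `j - i` plus its mirror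
image under the reflection `i ↦ -1 - i`. -/
def reflectedBinom (m i j : ℕ) : ℚ := centeredBinom m (-1 - i - j) + centeredBinom m (j - i)

lemma reflectedBinom_comm (m i j : ℕ) : reflectedBinom m i j = reflectedBinom m j i := by
  rw [reflectedBinom, reflectedBinom, sub_right_comm, ← centeredBinom_neg m (j - i), neg_sub]

lemma reflectedBinom_succ_zero (m j : ℕ) :
    reflectedBinom (m + 1) 0 j = reflectedBinom m 1 j + 3 * reflectedBinom m 0 j := by
  have reflect_j : centeredBinom m (-1 - j + 1) = centeredBinom m j := by
    rw [← centeredBinom_neg]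
    ring_nf
  have reflect_succ_j : centeredBinom m (-1 - j) = centeredBinom m (j + 1) := by
    rw [← centeredBinom_neg, neg_sub, sub_neg_eq_add]
  simp only [reflectedBinom, centeredBinom_succ, Nat.cast_zero, Nat.cast_one, sub_zero, reflect_j,
    reflect_succ_j]
  ring_nf

lemma reflectedBinom_succ_succ (m i j : ℕ) :
    reflectedBinom (m + 1) (i + 1) j =
      reflectedBinom m (i + 2) j + 2 * reflectedBinom m (i + 1) j + reflectedBinom m i j := by
  simp only [reflectedBinom, centeredBinom_succ]
  push_cast
  ring_nf

lemma reflectedBinom_zero_zero (m : ℕ) : reflectedBinom m 0 0 = (m + 1).centralBinom / 2 := by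
  rw [← centeredBinom_zero_right, centeredBinom_succ, ← centeredBinom_neg m (0 + 1)]
  simp only [reflectedBinom, Nat.cast_zero, sub_zero, sub_self, zero_add, zero_sub]
  ring

theorem det_reflectedBinom (k m : ℕ) :
    (Matrix.of fun i j : Fin k => reflectedBinom m i j).det =
      (Matrix.of fun i j : Fin k => ((m + 1 + (i + j)).centralBinom : ℚ) / 2).det := by
  rw [det_eq_det_hankel_of_three_term_recurrence (fun i => if i = 0 then 3 else 2) 1 reflectedBinom
    (fun m j => reflectedBinom_comm m 0 j) (by simpa using reflectedBinom_succ_zero)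
    (by simpa using reflectedBinom_succ_succ)]
  simp only [reflectedBinom_zero_zero, add_right_comm m 1]

end CenteredBinom

/-- The determinant evaluation for Identity 2 in the even case `n = 2k`:
`det( C(2m, m+1-i-j) + C(2m, m-i+j) )_{1≤i,j≤k}
  = ∏_{j=0}^{2k-1} ∏_{i=1}^{m} (2i+j)/(i+j)`
(with `0`-based `i, j` the upper entries read `C(2m, m-1-i-j) + C(2m, m-i+j)`). -/
theorem stmt_16 (k m : ℕ) (hk : 1 ≤ k) :
    Matrix.det (Matrix.of fun i j : Fin k =>
      binQ (2 * m) ((m : ℤ) - 1 - (i : ℤ) - (j : ℤ)) +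
        binQ (2 * m) ((m : ℤ) - (i : ℤ) + (j : ℤ)))
    = ∏ j ∈ range (2 * k), ∏ i ∈ Icc 1 m, ((2 * i + j : ℕ) : ℚ) / ((i + j : ℕ) : ℚ) := by
  have entry (i j : Fin k) :
      binQ (2 * m) ((m : ℤ) - 1 - (i : ℤ) - (j : ℤ)) + binQ (2 * m) ((m : ℤ) - (i : ℤ) + (j : ℤ)) =
        reflectedBinom m i j := by
    rw [reflectedBinom, centeredBinom, centeredBinom]
    ring_nf
  simp only [entry]
  rw [det_reflectedBinom, det_hankel_half_centralBinom]
end
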